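/- Let N = 2^v r, where v > 0 and r is an odd prime such that 2 is a primitive root modulo r. Let S be an N-periodic binary sequence with L(S) = N > L_{N,1}(S) ≥ N - min(2^v, r - 2), and set Z = 2^{⌈log_2(N - L_{N,1}(S))⌉}. Then there exists exactly one position j with 0 ≤ j < Z such that L(S + E_1(j)) = L_{N,1}(S), and L_{N,1}(S) = L_{N,1;Z}(S). -/

import Mathlib

/-- Generating polynomial `S^N(x) = s_0 + s_1 x + ... + s_{N-1} x^{N-1}` of one period
of an `N`-periodic binary sequence. -/
noncomputable def genPoly {N : ℕ} (S : Fin N → ZMod 2) : Polynomial (ZMod 2) :=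
  ∑ i : Fin N, Polynomial.C (S i) * Polynomial.X ^ (i : ℕ)

/-- Linear complexity `L(S) = N - deg (gcd (1 - x^N, S^N(x)))`. -/
noncomputable def linComp {N : ℕ} (S : Fin N → ZMod 2) : ℕ :=
  N - (EuclideanDomain.gcd (1 - Polynomial.X ^ N) (genPoly S)).natDegree

/-- Hamming weight of one period of an `N`-periodic binary sequence. -/
def wt {N : ℕ} (T : Fin N → ZMod 2) : ℕ :=
  (Finset.univ.filter (fun i => T i ≠ 0)).card

/-- `k`-error linear complexity `L_{N,k}(S)`. -/
noncomputable def errLC {N : ℕ} (S : Fin N → ZMod 2) (k : ℕ) : ℕ :=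
  sInf {c | ∃ T : Fin N → ZMod 2, wt T ≤ k ∧ linComp (S + T) = c}

/-- `k`-error linear complexity with a zone of length `Z`: `L_{N,k;Z}(S)`. -/
noncomputable def errLCZone {N : ℕ} (S : Fin N → ZMod 2) (k Z : ℕ) : ℕ :=
  sInf {c | ∃ T : Fin N → ZMod 2, wt T ≤ k ∧ (∀ i : Fin N, Z ≤ (i : ℕ) → T i = 0) ∧
    linComp (S + T) = c}

/-- `E_1(j)`: the sequence whose only nonzero term in one period is a `1` at position `j`. -/
def E1 {N : ℕ} (j : Fin N) : Fin N → ZMod 2 :=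
  fun i => if i = j then 1 else 0

/-!
Every irreducible factor of `1 + x + ⋯ + x^(r-1)` over `F_2` has degree at least the order of `2`
modulo some prime divisor of `r`; when `2` is a primitive root modulo the prime `r`, this order is
`r - 1`. Hence a divisor of `x^N - 1 = (x^r - 1)^(2^v)` of degree below these orders is a power of
`x - 1`. With `m = N - L_{N,1}(S)`, the positions `j` with `L(S + E_1(j)) = L_{N,1}(S)` are
therefore those for which `(x - 1)^m` divides `S^N(x) + x^j`. They form one residue class modulo
the multiplicative order of `x` modulo `(x - 1)^m`, and this order is `2^⌈log_2 m⌉ = Z`.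
-/

open Polynomial

section XSubOne

variable {R : Type*} [CommRing R]

theorem X_sub_one_dvd_geom_sum_iff {q : ℕ} :
    (X - 1 : R[X]) ∣ ∑ i ∈ Finset.range q, X ^ i ↔ (q : R) = 0 := by
  rw [← C_1, dvd_iff_isRoot, IsRoot.def, eval_geom_sum, one_geom_sum]

theorem X_pow_char_pow_mul_sub_one (p : ℕ) [Fact p.Prime] [CharP R p] (a q : ℕ) :
    (X ^ (p ^ a * q) - 1 : R[X]) = (∑ i ∈ Finset.range q, X ^ i) ^ p ^ a * (X - 1) ^ p ^ a := by
  rw [← mul_pow, geom_sum_mul, sub_pow_char_pow, one_pow, ← pow_mul, mul_comm]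

theorem one_sub_X_pow_ne_zero [Nontrivial R] {n : ℕ} (hn : 0 < n) : (1 - X ^ n : R[X]) ≠ 0 := by
  rw [← neg_sub, neg_ne_zero]
  exact X_pow_sub_C_ne_zero hn 1

variable [IsDomain R]

theorem prime_X_sub_one : Prime (X - 1 : R[X]) :=
  prime_X_sub_C 1

theorem natDegree_X_sub_one_pow (m : ℕ) : ((X - 1 : R[X]) ^ m).natDegree = m := by
  rw [natDegree_pow, ← C_1, natDegree_X_sub_C, mul_one]

variable (p : ℕ) [Fact p.Prime] [CharP R p]

theorem X_sub_one_pow_dvd_X_pow_sub_one_iff {m d : ℕ} :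
    (X - 1 : R[X]) ^ m ∣ X ^ d - 1 ↔ p ^ Nat.clog p m ∣ d := by
  have hp : p.Prime := Fact.out
  constructor
  · intro hdvd
    obtain rfl | hd := eq_or_ne d 0
    · exact dvd_zero _
    obtain ⟨a, q, hpq, rfl⟩ := Nat.exists_eq_pow_mul_and_not_dvd hd p hp.ne_one
    have hgeom : ¬ (X - 1 : R[X]) ∣ ∑ i ∈ Finset.range q, X ^ i := by
      rwa [X_sub_one_dvd_geom_sum_iff, CharP.cast_eq_zero_iff R p]
    rw [X_pow_char_pow_mul_sub_one] at hdvd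
    have hma : m ≤ p ^ a :=
      (pow_dvd_pow_iff prime_X_sub_one.ne_zero prime_X_sub_one.not_isUnit).1
        (prime_X_sub_one.pow_dvd_of_dvd_mul_left m (hgeom ∘ prime_X_sub_one.dvd_of_dvd_pow) hdvd)
    exact (pow_dvd_pow p (Nat.clog_le_of_le_pow hma)).mul_right q
  · rintro ⟨q, rfl⟩
    rw [X_pow_char_pow_mul_sub_one]
    exact (pow_dvd_pow _ (Nat.le_pow_clog hp.one_lt m)).mul_left _

theorem X_sub_one_pow_dvd_X_pow_sub_X_pow_iff {m a b : ℕ} :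
    (X - 1 : R[X]) ^ m ∣ X ^ b - X ^ a ↔ a ≡ b [MOD p ^ Nat.clog p m] := by
  wlog hab : a ≤ b generalizing a b
  · rw [dvd_sub_comm, this (le_of_not_ge hab), Nat.ModEq.comm]
  have hcop : IsCoprime ((X - 1 : R[X]) ^ m) (X ^ a) := IsCoprime.pow ⟨-1, 1, by ring⟩
  have hfactor : (X ^ b - X ^ a : R[X]) = X ^ a * (X ^ (b - a) - 1) := by
    rw [mul_sub_one, ← pow_add, Nat.add_sub_cancel' hab]
  calc (X - 1 : R[X]) ^ m ∣ X ^ b - X ^ a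
      ↔ (X - 1) ^ m ∣ X ^ (b - a) - 1 := by
        rw [hfactor]
        exact ⟨hcop.dvd_of_dvd_mul_left, fun h => h.mul_left _⟩
    _ ↔ p ^ Nat.clog p m ∣ b - a := X_sub_one_pow_dvd_X_pow_sub_one_iff p
    _ ↔ a ≡ b [MOD p ^ Nat.clog p m] := (Nat.modEq_iff_dvd' hab).symm

end XSubOne

section FiniteField

theorem pos_of_coprime_of_one_lt {c r : ℕ} (hc : 1 < c) (hcr : c.Coprime r) : 0 < r := by
  refine Nat.pos_of_ne_zero ?_
  rintro rfl
  exact hc.ne' ((Nat.coprime_zero_right c).1 hcr)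

theorem coprime_of_forall_orderOf_pos {c r : ℕ}
    (hord : ∀ q, q.Prime → q ∣ r → 0 < orderOf (c : ZMod q)) : c.Coprime r := by
  refine Nat.coprime_of_dvd fun q hq hqc hqr => ?_
  have := Fact.mk hq
  have hpos := hord q hq hqr
  rw [(ZMod.natCast_eq_zero_iff _ _).2 hqc, orderOf_zero] at hpos
  exact hpos.false

variable {K : Type*} [Field K] [Fintype K] {r : ℕ}

theorem exists_prime_orderOf_card_le_natDegree (hr : (Fintype.card K).Coprime r) {f : K[X]}
    (hf : Irreducible f) (hdvd : f ∣ ∑ i ∈ Finset.range r, X ^ i) :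
    ∃ q, q.Prime ∧ q ∣ r ∧ orderOf (Fintype.card K : ZMod q) ≤ f.natDegree := by
  rw [← prod_cyclotomic_eq_geom_sum (pos_of_coprime_of_one_lt Fintype.one_lt_card hr),
    hf.prime.dvd_finsetProd_iff] at hdvd
  obtain ⟨n, hn, hfn⟩ := hdvd
  obtain ⟨hn1, hnr, -⟩ : n ≠ 1 ∧ n ∣ r ∧ r ≠ 0 := by simpa using hn
  have hdeg : f.natDegree = orderOf (Fintype.card K : ZMod n) := by
    obtain ⟨p, -, k, hp, hcard⟩ := FiniteField.card' K
    have := Fact.mk hp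
    have hpn : p.Coprime n :=
      (hr.coprime_dvd_right hnr).coprime_dvd_left (hcard ▸ dvd_pow_self p k.ne_zero)
    rw [natDegree_of_dvd_cyclotomic_of_irreducible hcard hpn hfn hf, ← orderOf_units,
      ZMod.coe_unitOfCoprime, hcard]
  have hmap : orderOf (Fintype.card K : ZMod n.minFac) ∣ orderOf (Fintype.card K : ZMod n) := by
    simpa using orderOf_map_dvd (ZMod.castHom n.minFac_dvd (ZMod n.minFac)).toMonoidHom
      (Fintype.card K : ZMod n)
  exact ⟨n.minFac, Nat.minFac_prime hn1, n.minFac_dvd.trans hnr,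
    Nat.le_of_dvd hf.natDegree_pos (hdeg ▸ hmap)⟩

theorem associated_X_sub_one_pow_of_dvd (p : ℕ) [Fact p.Prime] [CharP K p] {v : ℕ} {g : K[X]}
    (hg : g ∣ X ^ (p ^ v * r) - 1)
    (hord : ∀ q, q.Prime → q ∣ r → g.natDegree < orderOf (Fintype.card K : ZMod q)) :
    Associated g ((X - 1) ^ g.natDegree) := by
  have hr : (Fintype.card K).Coprime r :=
    coprime_of_forall_orderOf_pos fun q hq hqr => (hord q hq hqr).pos
  have hN : 0 < p ^ v * r :=
    Nat.mul_pos (Nat.pow_pos (Fact.out : p.Prime).pos)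
      (pos_of_coprime_of_one_lt Fintype.one_lt_card hr)
  have hg0 : g ≠ 0 := ne_zero_of_dvd_ne_zero (X_pow_sub_C_ne_zero hN 1) hg
  have hcop : IsCoprime g ((∑ i ∈ Finset.range r, X ^ i) ^ p ^ v) := by
    refine (isCoprime_of_irreducible_dvd (fun h => hg0 h.1) fun f hf hfg hfr => ?_).pow_right
    obtain ⟨q, hq, hqr, hle⟩ := exists_prime_orderOf_card_le_natDegree hr hf hfr
    exact (hle.trans (natDegree_le_of_dvd hfg hg0)).not_gt (hord q hq hqr)
  rw [X_pow_char_pow_mul_sub_one] at hg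
  obtain ⟨i, -, hi⟩ := (dvd_prime_pow prime_X_sub_one _).1 (hcop.dvd_of_dvd_mul_left hg)
  rwa [natDegree_eq_of_degree_eq (degree_eq_degree_of_associated hi), natDegree_X_sub_one_pow]

end FiniteField

section LinearComplexity

variable {N : ℕ}

theorem genPoly_add_E1 (S : Fin N → ZMod 2) (j : Fin N) :
    genPoly (S + E1 j) = genPoly S + X ^ (j : ℕ) := by
  simp [genPoly, E1, add_mul, Finset.sum_add_distrib]

theorem wt_E1 (j : Fin N) : wt (E1 j) = 1 := by
  simp [wt, E1, Finset.filter_eq']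

theorem exists_eq_E1_of_wt_le_one {T : Fin N → ZMod 2} (hT : wt T ≤ 1) (hT0 : T ≠ 0) :
    ∃ j, T = E1 j := by
  obtain ⟨j, hj⟩ := Function.ne_iff.1 hT0
  refine ⟨j, funext fun i => ?_⟩
  obtain rfl | hij := eq_or_ne i j
  · rw [E1, if_pos rfl]
    exact Fin.eq_one_of_ne_zero _ hj
  · rw [E1, if_neg hij]
    by_contra hi
    exact hij (Finset.card_le_one.1 hT i (by simpa using hi) j (by simpa using hj))

theorem natDegree_gcd_eq_sub_linComp (S : Fin N → ZMod 2) :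
    (EuclideanDomain.gcd (1 - X ^ N) (genPoly S)).natDegree = N - linComp S := by
  suffices hle : (EuclideanDomain.gcd (1 - X ^ N) (genPoly S)).natDegree ≤ N by
    rw [linComp, Nat.sub_sub_self hle]
  obtain rfl | hN := N.eq_zero_or_pos
  · simp [genPoly]
  · exact (natDegree_le_of_dvd (EuclideanDomain.gcd_dvd_left _ _) (one_sub_X_pow_ne_zero hN)).trans
      (by compute_degree)

theorem linComp_le_of_dvd {S : Fin N → ZMod 2} {g : (ZMod 2)[X]} (hgN : g ∣ 1 - X ^ N)
    (hgS : g ∣ genPoly S) : linComp S ≤ N - g.natDegree := by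
  obtain rfl | hN := N.eq_zero_or_pos
  · simp [linComp]
  · exact Nat.sub_le_sub_left (natDegree_le_of_dvd (EuclideanDomain.dvd_gcd hgN hgS)
      fun h => one_sub_X_pow_ne_zero hN (EuclideanDomain.gcd_eq_zero_iff.1 h).1) N

theorem errLC_le_linComp_add (S : Fin N → ZMod 2) {T : Fin N → ZMod 2} {k : ℕ} (hT : wt T ≤ k) :
    errLC S k ≤ linComp (S + T) :=
  Nat.sInf_le ⟨T, hT, rfl⟩

theorem exists_linComp_add_eq_errLC (S : Fin N → ZMod 2) (k : ℕ) :
    ∃ T, wt T ≤ k ∧ linComp (S + T) = errLC S k :=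
  Nat.sInf_mem (s := {c | ∃ T, wt T ≤ k ∧ linComp (S + T) = c}) ⟨_, 0, by simp [wt], rfl⟩

theorem exists_linComp_add_E1_eq_errLC {S : Fin N → ZMod 2} (hS : errLC S 1 < linComp S) :
    ∃ j, linComp (S + E1 j) = errLC S 1 := by
  obtain ⟨T, hT, hopt⟩ := exists_linComp_add_eq_errLC S 1
  obtain ⟨j, rfl⟩ := exists_eq_E1_of_wt_le_one hT <| by
    rintro rfl
    exact hS.ne (by rw [← hopt, add_zero])
  exact ⟨j, hopt⟩

theorem errLC_eq_errLCZone_of_linComp_eq {S T : Fin N → ZMod 2} {k Z : ℕ} (hT : wt T ≤ k)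
    (hTZ : ∀ i : Fin N, Z ≤ i → T i = 0) (hopt : linComp (S + T) = errLC S k) :
    errLC S k = errLCZone S k Z := by
  refine le_antisymm (le_csInf ⟨_, T, hT, hTZ, rfl⟩ ?_) (Nat.sInf_le ⟨T, hT, hTZ, hopt⟩)
  rintro _ ⟨T', hT', -, rfl⟩
  exact errLC_le_linComp_add S hT'

end LinearComplexity

section OptimalPositions

variable {v r : ℕ} {S : Fin (2 ^ v * r) → ZMod 2}

theorem associated_gcd_X_sub_one_pow
    (hord : ∀ q, q.Prime → q ∣ r → 2 ^ v * r - linComp S < orderOf (2 : ZMod q)) :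
    Associated (EuclideanDomain.gcd (1 - X ^ (2 ^ v * r)) (genPoly S))
      ((X - 1) ^ (2 ^ v * r - linComp S)) := by
  rw [← natDegree_gcd_eq_sub_linComp] at hord ⊢
  refine associated_X_sub_one_pow_of_dvd 2 (v := v) (r := r)
    (dvd_sub_comm.1 (EuclideanDomain.gcd_dvd_left _ _)) ?_
  simpa only [ZMod.card, Nat.cast_ofNat] using hord

theorem linComp_add_E1_eq_errLC_iff_modEq
    (hord : ∀ q, q.Prime → q ∣ r → 2 ^ v * r - errLC S 1 < orderOf (2 : ZMod q))
    {i : Fin (2 ^ v * r)} (hi : linComp (S + E1 i) = errLC S 1) (j : Fin (2 ^ v * r)) :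
    linComp (S + E1 j) = errLC S 1 ↔ i ≡ j [MOD 2 ^ Nat.clog 2 (2 ^ v * r - errLC S 1)] := by
  set m := 2 ^ v * r - errLC S 1 with hm
  have hgcd {k : Fin (2 ^ v * r)} (hk : linComp (S + E1 k) = errLC S 1) :
      (X - 1) ^ m ∣ EuclideanDomain.gcd (1 - X ^ (2 ^ v * r)) (genPoly (S + E1 k)) := by
    rw [hm, ← hk]
    exact (associated_gcd_X_sub_one_pow (by rwa [hk])).symm.dvd
  have hN : (X - 1 : (ZMod 2)[X]) ^ m ∣ 1 - X ^ (2 ^ v * r) :=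
    (hgcd hi).trans (EuclideanDomain.gcd_dvd_left _ _)
  have hopt_iff : linComp (S + E1 j) = errLC S 1 ↔ (X - 1) ^ m ∣ genPoly (S + E1 j) := by
    refine ⟨fun hj => (hgcd hj).trans (EuclideanDomain.gcd_dvd_right _ _), fun hj => ?_⟩
    refine le_antisymm ?_ (errLC_le_linComp_add S (wt_E1 j).le)
    have hle := linComp_le_of_dvd hN hj
    have herr : errLC S 1 ≤ 2 ^ v * r := hi.symm.trans_le (Nat.sub_le _ _)
    rwa [natDegree_X_sub_one_pow, hm, Nat.sub_sub_self herr] at hle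
  rw [hopt_iff, ← dvd_sub_left ((hgcd hi).trans (EuclideanDomain.gcd_dvd_right _ _)),
    genPoly_add_E1, genPoly_add_E1, add_sub_add_left_eq_sub,
    X_sub_one_pow_dvd_X_pow_sub_X_pow_iff 2]

end OptimalPositions

theorem stmt16_general (v r : ℕ) (S : Fin (2 ^ v * r) → ZMod 2)
    (hS : errLC S 1 < linComp S)
    (hord : ∀ q, q.Prime → q ∣ r → 2 ^ v * r - errLC S 1 < orderOf (2 : ZMod q)) :
    (∃! j : Fin (2 ^ v * r), (j : ℕ) < 2 ^ Nat.clog 2 (2 ^ v * r - errLC S 1) ∧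
      linComp (S + E1 j) = errLC S 1) ∧
    errLC S 1 = errLCZone S 1 (2 ^ Nat.clog 2 (2 ^ v * r - errLC S 1)) := by
  obtain ⟨i, hi⟩ := exists_linComp_add_E1_eq_errLC hS
  have hopt := linComp_add_E1_eq_errLC_iff_modEq hord hi
  set Z := 2 ^ Nat.clog 2 (2 ^ v * r - errLC S 1)
  let j : Fin (2 ^ v * r) := ⟨i % Z, (Nat.mod_le _ _).trans_lt i.isLt⟩
  have hjZ : (j : ℕ) < Z := Nat.mod_lt _ (by positivity)
  have hj : linComp (S + E1 j) = errLC S 1 := (hopt j).2 (Nat.mod_modEq _ _).symm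
  refine ⟨⟨j, ⟨hjZ, hj⟩, ?_⟩, errLC_eq_errLCZone_of_linComp_eq (wt_E1 j).le ?_ hj⟩
  · rintro k ⟨hkZ, hk⟩
    exact Fin.ext ((((hopt k).1 hk).symm.trans ((hopt j).1 hj)).eq_of_lt_of_lt hkZ hjZ)
  · rintro k hZk
    exact if_neg (by rintro rfl; exact hjZ.not_ge hZk)

/-- For `N = 2^v r` with `2` primitive mod the odd prime `r`, `L(S) = N` and
`N > L_{N,1}(S) ≥ N - min(2^v, r-2)`: there is exactly one `j < Z` with
`L(S + E_1(j)) = L_{N,1}(S)`, and `L_{N,1}(S) = L_{N,1;Z}(S)`. -/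
theorem stmt16 (v r : ℕ) (hv : 0 < v) (hr : r.Prime) (hodd : Odd r)
    (hprim : orderOf (2 : ZMod r) = r - 1)
    (S : Fin (2^v * r) → ZMod 2)
    (hLS : linComp S = 2^v * r)
    (hgt : errLC S 1 < 2^v * r)
    (hge : 2^v * r - min (2^v) (r - 2) ≤ errLC S 1) :
    (∃! j : Fin (2^v * r), (j : ℕ) < 2^(Nat.clog 2 (2^v * r - errLC S 1)) ∧
      linComp (S + E1 j) = errLC S 1) ∧
    errLC S 1 = errLCZone S 1 (2^(Nat.clog 2 (2^v * r - errLC S 1))) := by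
  refine stmt16_general v r S (hgt.trans_eq hLS.symm) fun q hq hqr => ?_
  rw [(Nat.prime_dvd_prime_iff_eq hq hr).1 hqr, hprim]
  have := hr.two_le
  omega
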